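/- Let R = K[x_1,...,x_n] and S = R/I for a squarefree monomial ideal I. Define W_k = {p ∈ Spec(R) : p ⊇ I, 𝒜^{S_p} is k-generated fails}, equivalently via Proposition: p lies in the complement of W_k iff (I^{[p^e]} : I)R_p = L_e R_p for all e > k. Then the minimal elements of W (the non-finitely-generated locus) with respect to inclusion are face ideals (ideals generated by subsets of the variables), and consequently W = V(J) where J is the intersection of the finitely many minimal face ideals in W; in particular W is Zariski closed. -/

import Mathlib

open MvPolynomial

def frobPow {R : Type*} [CommRing R] (J : Ideal R) (q : ℕ) : Ideal R :=
  Ideal.span ((fun f => f ^ q) '' (J : Set R))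

def chainProd {R : Type*} [CommRing R] (I : Ideal R) (p : ℕ) : ℕ → List ℕ → Ideal R
  | _, [] => ⊤
  | c, a :: rest => frobPow ((frobPow I (p ^ a)).colon I) (p ^ c) * chainProd I p (c + a) rest

/-- `L_e = Σ_{a₁+⋯+a_s = e, 1 ≤ aᵢ ≤ e-1} (I^{[p^{a₁}]}:I)·(I^{[p^{a₂}]}:I)^{[p^{a₁}]}⋯`. -/
def Le {R : Type*} [CommRing R] (I : Ideal R) (p e : ℕ) : Ideal R :=
  ⨆ l ∈ {l : List ℕ | l.sum = e ∧ ∀ a ∈ l, 1 ≤ a ∧ a ≤ e - 1}, chainProd I p 0 l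

noncomputable def faceIdeal (K : Type*) [Field K] {n : ℕ} (F : Finset (Fin n)) :
    Ideal (MvPolynomial (Fin n) K) :=
  Ideal.span ((fun i : Fin n => (X i : MvPolynomial (Fin n) K)) '' {i | i ∉ F})

/-- The algebra `𝒜^{S_q}` is finitely generated (equivalently, some `k`-generation holds):
`(I^{[p^e]} : I) R_q = L_e R_q` for all `e > k`, for some `k`. -/
def fgAt {R : Type*} [CommRing R] (p : ℕ) (I : Ideal R) (q : Ideal R) [q.IsPrime] : Prop :=
  ∃ k : ℕ, ∀ e > k,
    ((frobPow I (p ^ e)).colon I).map (algebraMap R (Localization.AtPrime q)) =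
      (Le I p e).map (algebraMap R (Localization.AtPrime q))

/-- The ideal is generated by monomials. -/
def IsMonomialIdeal {σ K : Type*} [Field K] (A : Ideal (MvPolynomial σ K)) : Prop :=
  ∃ s : Set (σ →₀ ℕ), A = Ideal.span ((fun d => monomial d (1 : K)) '' s)

section MonomialIdeals

variable {σ K : Type*} [Field K] {A B : Ideal (MvPolynomial σ K)}

theorem IsMonomialIdeal.monomial_mem (hA : IsMonomialIdeal A) {f : MvPolynomial σ K}
    (hf : f ∈ A) {d : σ →₀ ℕ} (hd : d ∈ f.support) : monomial d (1 : K) ∈ A := by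
  obtain ⟨s, rfl⟩ := hA
  rw [mem_ideal_span_monomial_image] at hf ⊢
  intro e he
  have he' : e = d := by
    simpa using support_monomial_subset he
  exact he' ▸ hf d hd

theorem mem_of_forall_monomial_mem {f : MvPolynomial σ K}
    (h : ∀ d ∈ f.support, monomial d (1 : K) ∈ A) : f ∈ A := by
  rw [f.as_sum]
  refine A.sum_mem fun d hd => ?_
  have := A.mul_mem_left (C (f.coeff d)) (h d hd)
  rwa [C_mul_monomial, mul_one] at this

theorem isMonomialIdeal_of_forall
    (h : ∀ f ∈ A, ∀ d ∈ f.support, monomial d (1 : K) ∈ A) : IsMonomialIdeal A := by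
  refine ⟨{d | monomial d (1 : K) ∈ A}, le_antisymm (fun f hf => ?_) (Ideal.span_le.2 ?_)⟩
  · exact mem_of_forall_monomial_mem fun d hd =>
      Ideal.subset_span ⟨d, h f hf d hd, rfl⟩
  · rintro _ ⟨d, hd, rfl⟩
    exact hd

theorem isMonomialIdeal_top : IsMonomialIdeal (⊤ : Ideal (MvPolynomial σ K)) :=
  isMonomialIdeal_of_forall fun _ _ _ _ => Submodule.mem_top

theorem IsMonomialIdeal.mul (hA : IsMonomialIdeal A) (hB : IsMonomialIdeal B) :
    IsMonomialIdeal (A * B) := by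
  obtain ⟨s, rfl⟩ := hA
  obtain ⟨t, rfl⟩ := hB
  refine ⟨Set.image2 (· + ·) s t, ?_⟩
  rw [Ideal.span_mul_span', ← Set.image2_mul, Set.image2_image_left, Set.image2_image_right,
    Set.image_image2]
  simp only [monomial_mul, mul_one]

theorem IsMonomialIdeal.iSup {ι : Sort*} {A : ι → Ideal (MvPolynomial σ K)}
    (h : ∀ i, IsMonomialIdeal (A i)) : IsMonomialIdeal (⨆ i, A i) := by
  choose s hs using h
  refine ⟨⋃ i, s i, ?_⟩
  rw [Set.image_iUnion, Ideal.span_iUnion]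
  exact iSup_congr hs

theorem IsMonomialIdeal.colon (hA : IsMonomialIdeal A) (hB : IsMonomialIdeal B) :
    IsMonomialIdeal (A.colon (B : Set (MvPolynomial σ K))) := by
  refine isMonomialIdeal_of_forall fun f hf d hd => ?_
  obtain ⟨t, rfl⟩ := hB
  rw [Submodule.mem_colon] at hf ⊢
  intro b hb
  refine Submodule.span_induction (p := fun b _ => monomial d (1 : K) • b ∈ A) ?_ ?_ ?_ ?_ hb
  · rintro _ ⟨e, he, rfl⟩
    have hfe := hf _ (Ideal.subset_span ⟨e, he, rfl⟩)
    have hde : d + e ∈ (f • monomial e (1 : K)).support := by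
      rw [mem_support_iff] at hd ⊢
      rwa [smul_eq_mul, coeff_mul_monomial, mul_one]
    simpa [monomial_mul] using hA.monomial_mem hfe hde
  · simp
  · intro x y _ _ hx hy
    rw [smul_add]
    exact A.add_mem hx hy
  · intro r x _ hx
    rw [smul_comm]
    exact A.smul_mem r hx

theorem frobPow_eq_map_iterateFrobenius {R : Type*} [CommRing R] (p : ℕ) [ExpChar R p]
    (J : Ideal R) (c : ℕ) : frobPow J (p ^ c) = J.map (iterateFrobenius R p c) := rfl

variable (p : ℕ) [Fact p.Prime] [CharP K p]

theorem IsMonomialIdeal.frobPow (hA : IsMonomialIdeal A) (c : ℕ) :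
    IsMonomialIdeal (frobPow A (p ^ c)) := by
  obtain ⟨s, rfl⟩ := hA
  refine ⟨(fun d => p ^ c • d) '' s, ?_⟩
  rw [frobPow_eq_map_iterateFrobenius, Ideal.map_span, Set.image_image, Set.image_image]
  simp only [iterateFrobenius_def, monomial_pow, one_pow]

theorem IsMonomialIdeal.chainProd (hA : IsMonomialIdeal A) (c : ℕ) (l : List ℕ) :
    IsMonomialIdeal (chainProd A p c l) := by
  induction l generalizing c with
  | nil => exact isMonomialIdeal_top
  | cons a l ih => exact (((hA.frobPow p a).colon hA).frobPow p c).mul (ih (c + a))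

theorem IsMonomialIdeal.Le (hA : IsMonomialIdeal A) (e : ℕ) : IsMonomialIdeal (Le A p e) :=
  .iSup fun l => .iSup fun _ => hA.chainProd p 0 l

end MonomialIdeals

section Localization

variable {σ K : Type*} [Field K] {A B q q' : Ideal (MvPolynomial σ K)}

theorem monomial_mem_of_forall_X_mem [q.IsPrime] (h : ∀ i, X i ∈ q → X i ∈ q')
    {d : σ →₀ ℕ} (hd : monomial d (1 : K) ∈ q) : monomial d (1 : K) ∈ q' := by
  rw [monomial_eq, C_1, one_mul, Finsupp.prod, Ideal.IsPrime.prod_mem_iff] at hd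
  obtain ⟨i, hi, hid⟩ := hd
  have hi' := h i (Ideal.IsPrime.mem_of_pow_mem ‹_› _ hid)
  rw [monomial_eq, C_1, one_mul, Finsupp.prod]
  exact Ideal.mem_of_dvd _ ((dvd_pow_self _ (Finsupp.mem_support_iff.1 hi)).trans
    (Finset.dvd_prod_of_mem _ hi)) hi'

/-- An inclusion of localized monomial ideals passes to primes containing fewer variables. -/
theorem IsMonomialIdeal.map_localization_le [q.IsPrime] [q'.IsPrime] (hA : IsMonomialIdeal A)
    (hB : IsMonomialIdeal B) (h : ∀ i, X i ∈ q → X i ∈ q')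
    (hle : A.map (algebraMap _ (Localization.AtPrime q')) ≤
      B.map (algebraMap _ (Localization.AtPrime q'))) :
    A.map (algebraMap _ (Localization.AtPrime q)) ≤
      B.map (algebraMap _ (Localization.AtPrime q)) := by
  obtain ⟨s, rfl⟩ := hA
  rw [Ideal.map_le_iff_le_comap, Ideal.span_le]
  rintro _ ⟨d, hd, rfl⟩
  have hd' := hle (Ideal.mem_map_of_mem _ (Ideal.subset_span ⟨d, hd, rfl⟩))
  rw [IsLocalization.algebraMap_mem_map_algebraMap_iff q'.primeCompl] at hd'
  obtain ⟨m, hm, hmd⟩ := hd'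
  obtain ⟨e, he, heq⟩ : ∃ e ∈ m.support, monomial e (1 : K) ∉ q' := by
    by_contra! hall
    exact hm (mem_of_forall_monomial_mem hall)
  rw [SetLike.mem_coe, Ideal.mem_comap,
    IsLocalization.algebraMap_mem_map_algebraMap_iff q.primeCompl]
  refine ⟨monomial e 1, fun heq' => heq (monomial_mem_of_forall_X_mem h heq'), ?_⟩
  have hed : e + d ∈ (m * monomial d (1 : K)).support := by
    rw [mem_support_iff] at he ⊢
    rwa [coeff_mul_monomial, mul_one]
  simpa [monomial_mul] using hB.monomial_mem hmd hed

theorem IsMonomialIdeal.fgAt_of_forall_X_mem (p : ℕ) [Fact p.Prime] [CharP K p]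
    [q.IsPrime] [q'.IsPrime] (hA : IsMonomialIdeal A) (h : ∀ i, X i ∈ q → X i ∈ q')
    (hfg : fgAt p A q') : fgAt p A q := by
  obtain ⟨k, hk⟩ := hfg
  refine ⟨k, fun e he => ?_⟩
  have hcolon := (hA.frobPow p e).colon hA
  exact le_antisymm (hcolon.map_localization_le (hA.Le p e) h (hk e he).le)
    ((hA.Le p e).map_localization_le hcolon h (hk e he).ge)

end Localization

theorem prod_X_eq_monomial {σ K : Type*} [Field K] (G : Finset σ) :
    ∏ i ∈ G, (X i : MvPolynomial σ K) = monomial (∑ i ∈ G, Finsupp.single i 1) 1 :=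
  (monomial_sum_one G _).symm

/-- For a squarefree monomial ideal `I` over a field of characteristic `p`, the
non-finitely-generated locus `W = {q ⊇ I : 𝒜^{S_q} not finitely generated}` equals `V(J)`
for `J` an intersection of finitely many face ideals; in particular `W` is Zariski closed. -/
theorem stmt14 (K : Type*) [Field K] (p : ℕ) [Fact p.Prime] [CharP K p] {n : ℕ}
    (𝒢 : Set (Finset (Fin n)))
    (I : Ideal (MvPolynomial (Fin n) K))
    (hI : I = Ideal.span ((fun G : Finset (Fin n) =>
      ∏ i ∈ G, (X i : MvPolynomial (Fin n) K)) '' 𝒢)) :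
    ∃ 𝒮 : Finset (Finset (Fin n)),
      ∀ (q : Ideal (MvPolynomial (Fin n) K)) [q.IsPrime],
        ((I ≤ q ∧ ¬ fgAt p I q) ↔ 𝒮.inf (fun F => faceIdeal K F) ≤ q) := by
  classical
  have hmon : IsMonomialIdeal I := by
    refine ⟨(fun G : Finset (Fin n) => ∑ i ∈ G, Finsupp.single i 1) '' 𝒢, ?_⟩
    rw [hI, Set.image_image]
    simp only [prod_X_eq_monomial]
  let inLocus (F : Finset (Fin n)) : Prop := ∃ (q : Ideal (MvPolynomial (Fin n) K))
    (_ : q.IsPrime), (I ≤ q ∧ ¬ fgAt p I q) ∧ ∀ i, X i ∈ q ↔ i ∉ F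
  refine ⟨Finset.univ.filter inLocus, fun q _ => ⟨fun hq => ?_, fun hq => ?_⟩⟩
  · let F : Finset (Fin n) := Finset.univ.filter fun i => (X i : MvPolynomial (Fin n) K) ∉ q
    have hF : ∀ i, X i ∈ q ↔ i ∉ F := by simp [F]
    refine (Finset.inf_le (b := F) (by simpa using ⟨q, ‹_›, hq, hF⟩)).trans ?_
    rw [faceIdeal, Ideal.span_le]
    rintro _ ⟨i, hi, rfl⟩
    exact (hF i).2 hi
  · obtain ⟨F, hF, hFq⟩ := (Ideal.IsPrime.inf_le' ‹_›).1 hq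
    obtain ⟨q₀, _, ⟨hIq₀, hfg⟩, hX⟩ := (Finset.mem_filter.1 hF).2
    have h : ∀ i, X i ∈ q₀ → X i ∈ q := fun i hi =>
      hFq (Ideal.subset_span ⟨i, (hX i).1 hi, rfl⟩)
    refine ⟨?_, fun hfgq => hfg (hmon.fgAt_of_forall_X_mem p h hfgq)⟩
    obtain ⟨s, hs⟩ := hmon
    rw [hs, Ideal.span_le] at hIq₀ ⊢
    rintro _ ⟨d, hd, rfl⟩
    exact monomial_mem_of_forall_X_mem h (hIq₀ ⟨d, hd, rfl⟩)
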